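/- For every integer k ≥ 3, ∫_0^1 s^{-2/k} ∫_0^{1-s} F(2/k, 1/k; 1 + 1/k; -t/s) dt ds = k π cot(π/k) / (2(k-2)(k-1)). -/

import Mathlib

open MeasureTheory Real Set

/-- The Gauss hypergeometric function `₂F₁(a, b; c; z)`, given (for `c > b > 0` and `z < 1`)
by Euler's integral representation. -/
noncomputable def hypF (a b c z : ℝ) : ℝ :=
  (Real.Gamma c / (Real.Gamma b * Real.Gamma (c - b))) *
    ∫ t in Set.Ioo (0 : ℝ) 1, t ^ (b - 1) * (1 - t) ^ (c - b - 1) * (1 - z * t) ^ (-a)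

/-!
For `c = 1 + b` Euler's representation reads
`s ^ (-p) * F(p, b; 1 + b; -t / s) = b * ∫ u in (0, 1), u ^ (b - 1) * (s + t * u) ^ (-p)`.
Integrating over the simplex first and over `u` last, the simplex integral is elementary, and what
remains is a multiple of `∫ u in (0, 1), (u ^ (b - 1) - u ^ (b - p)) / (1 - u)`. Expanding
`1 / (1 - u)` as a geometric series turns this into `∑ (1 / (n + b) - 1 / (n + b - p + 1))`, which
for `p = 2 * b` is the Mittag-Leffler expansion of `π * cot (π * b)`.
-/

open Filter Topology

section CotangentSeries

variable {a x y : ℝ}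

lemma summable_one_div_add_sub_one_div_add (hx : 0 < x) (hy : 0 < y) :
    Summable fun n : ℕ ↦ 1 / ((n : ℝ) + x) - 1 / (n + y) := by
  have summable_sq (z : ℝ) : Summable fun n : ℕ ↦ 1 / ((n : ℝ) + z) ^ 2 := by
    simpa using (summable_one_div_nat_add_rpow z 2).2 one_lt_two
  have summable_prod : Summable fun n : ℕ ↦ 1 / ((n : ℝ) + x) * (1 / (n + y)) := by
    refine .of_nonneg_of_le (fun n ↦ by positivity) (fun n ↦ ?_)
      ((summable_sq x).add (summable_sq y))
    simp only [← one_div_pow]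
    nlinarith [sq_nonneg (1 / ((n : ℝ) + x) - 1 / (n + y)), sq_nonneg (1 / ((n : ℝ) + x)),
      sq_nonneg (1 / ((n : ℝ) + y))]
  refine (summable_prod.mul_left (y - x)).congr fun n ↦ ?_
  have : (n : ℝ) + x ≠ 0 := by positivity
  have : (n : ℝ) + y ≠ 0 := by positivity
  field_simp
  ring

lemma hasSum_one_div_add_sub_one_div_add_one (hx : 0 < x) :
    HasSum (fun n : ℕ ↦ 1 / ((n : ℝ) + x) - 1 / (n + (1 + x))) (1 / x) := by
  have hsummable := summable_one_div_add_sub_one_div_add hx (show 0 < 1 + x by positivity)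
  have tendsto_term : Tendsto (fun n : ℕ ↦ 1 / ((n : ℝ) + x)) atTop (𝓝 0) :=
    (tendsto_atTop_add_const_right atTop x tendsto_natCast_atTop_atTop).const_div_atTop 1
  have partial_sum (N : ℕ) :
      ∑ n ∈ Finset.range N, (1 / ((n : ℝ) + x) - 1 / (n + (1 + x))) = 1 / x - 1 / (N + x) := by
    simpa [add_assoc] using Finset.sum_range_sub' (fun n : ℕ ↦ 1 / ((n : ℝ) + x)) N
  simpa only [hsummable.hasSum_iff_tendsto_nat, partial_sum, sub_zero] using
    tendsto_term.const_sub (1 / x)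

lemma hasSum_cotTerm_real (ha : a ∉ range ((↑) : ℤ → ℝ)) :
    HasSum (fun n : ℕ ↦ 1 / (a - (n + 1)) + 1 / (a + (n + 1))) (π * cot (π * a) - 1 / a) := by
  have ha' : (a : ℂ) ∈ Complex.integerComplement := by
    rintro ⟨m, hm⟩
    exact ha ⟨m, mod_cast hm⟩
  have h := (summable_cotTerm ha').hasSum
  simp only [cotTerm] at h
  rw [← cot_series_rep' ha'] at h
  exact mod_cast h

lemma hasSum_one_div_add_sub_one_div_add_one_sub (ha₀ : 0 < a)
    (ha : a ∉ range ((↑) : ℤ → ℝ)) :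
    HasSum (fun n : ℕ ↦ 1 / ((n : ℝ) + a) - 1 / (n + (1 - a))) (π * cot (π * a)) := by
  have h := (hasSum_cotTerm_real ha).add (hasSum_one_div_add_sub_one_div_add_one ha₀)
  rw [sub_add_cancel] at h
  refine h.congr_fun fun n ↦ ?_
  rw [show (n : ℝ) + (1 - a) = -(a - (n + 1)) by ring, div_neg,
    show a + ((n : ℝ) + 1) = n + (1 + a) by ring]
  ring

end CotangentSeries

section PowerIntegrals

variable {a c d l r x y : ℝ}

lemma integrableOn_rpow_sub_one (hx : 0 < x) :
    IntegrableOn (fun u : ℝ ↦ u ^ (x - 1)) (Ioo 0 1) :=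
  (intervalIntegral.integrableOn_Ioo_rpow_iff one_pos).2 (by linarith)

lemma setIntegral_add_mul_rpow (hl : 0 ≤ l) (hc : c ≠ 0)
    (hr : -1 < r ∨ r ≠ -1 ∧ (0 : ℝ) ∉ uIcc d (d + c * l)) :
    ∫ v in Ioo 0 l, (d + c * v) ^ r = ((d + c * l) ^ (r + 1) - d ^ (r + 1)) / (c * (r + 1)) := by
  rw [← integral_Ioc_eq_integral_Ioo, ← intervalIntegral.integral_of_le hl,
    intervalIntegral.integral_comp_add_mul (fun v ↦ v ^ r) hc, mul_zero, add_zero,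
    integral_rpow hr, smul_eq_mul, inv_mul_eq_div, div_div, mul_comm (r + 1)]

lemma setIntegral_rpow_sub_one (hx : 0 < x) : ∫ u in Ioo (0 : ℝ) 1, u ^ (x - 1) = 1 / x := by
  simpa [zero_rpow hx.ne'] using
    setIntegral_add_mul_rpow (d := 0) zero_le_one one_ne_zero
      (Or.inl (show -1 < x - 1 by linarith))

lemma hasSum_setIntegral_rpow_sub_rpow_div (hx : 0 < x) (hy : 0 < y) :
    HasSum (fun n : ℕ ↦ 1 / ((n : ℝ) + x) - 1 / (n + y))
      (∫ u in Ioo (0 : ℝ) 1, (u ^ (x - 1) - u ^ (y - 1)) / (1 - u)) := by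
  wlog hxy : x ≤ y generalizing x y
  · simpa [← integral_neg, ← neg_div] using (this hy hx (le_of_not_ge hxy)).neg
  let F (n : ℕ) (u : ℝ) : ℝ := u ^ (n + x - 1) - u ^ (n + y - 1)
  have integrable_pow (n : ℕ) {z : ℝ} (hz : 0 < z) :
      IntegrableOn (fun u : ℝ ↦ u ^ (n + z - 1)) (Ioo 0 1) :=
    integrableOn_rpow_sub_one (by positivity)
  have integrable_F (n : ℕ) : IntegrableOn (F n) (Ioo 0 1) :=
    (integrable_pow n hx).sub (integrable_pow n hy)
  have integral_F (n : ℕ) : ∫ u in Ioo (0 : ℝ) 1, F n u = 1 / (n + x) - 1 / (n + y) := by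
    rw [integral_sub (integrable_pow n hx) (integrable_pow n hy),
      setIntegral_rpow_sub_one (by positivity), setIntegral_rpow_sub_one (by positivity)]
  have integral_norm_F (n : ℕ) :
      ∫ u in Ioo (0 : ℝ) 1, ‖F n u‖ = 1 / (n + x) - 1 / (n + y) := by
    rw [← integral_F]
    refine setIntegral_congr_fun measurableSet_Ioo fun u hu ↦ norm_of_nonneg (sub_nonneg.2 ?_)
    exact rpow_le_rpow_of_exponent_ge hu.1 hu.2.le (by gcongr)
  have tsum_F {u : ℝ} (hu : u ∈ Ioo 0 1) :
      ∑' n, F n u = (u ^ (x - 1) - u ^ (y - 1)) / (1 - u) := by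
    have F_eq (n : ℕ) : F n u = (u ^ (x - 1) - u ^ (y - 1)) * u ^ n := by
      simp only [F, add_sub_assoc, rpow_add hu.1, rpow_natCast]
      ring
    simp only [F_eq, tsum_mul_left, tsum_geometric_of_lt_one hu.1.le hu.2, div_eq_mul_inv]
  have h := hasSum_integral_of_summable_integral_norm integrable_F
    (by simpa only [integral_norm_F] using summable_one_div_add_sub_one_div_add hx hy)
  simpa only [integral_F, setIntegral_congr_fun measurableSet_Ioo fun _ hu ↦ tsum_F hu] using h

lemma setIntegral_rpow_sub_rpow_div_eq_pi_mul_cot (ha₀ : 0 < a) (ha₁ : a < 1) :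
    ∫ u in Ioo (0 : ℝ) 1, (u ^ (a - 1) - u ^ (-a)) / (1 - u) = π * cot (π * a) := by
  have ha : a ∉ range ((↑) : ℤ → ℝ) := by
    rintro ⟨m, rfl⟩
    have : 0 < m := mod_cast ha₀
    have : m < 1 := mod_cast ha₁
    lia
  have h := hasSum_setIntegral_rpow_sub_rpow_div ha₀ (sub_pos.2 ha₁)
  rw [show 1 - a - 1 = -a by ring] at h
  exact h.unique (hasSum_one_div_add_sub_one_div_add_one_sub ha₀ ha)

end PowerIntegrals

section Simplex

lemma setIntegral_regionBetween {α E : Type*} [MeasurableSpace α] {μ : Measure α} [SFinite μ]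
    [NormedAddCommGroup E] [NormedSpace ℝ E] {f g : α → ℝ} {A : Set α} {F : α × ℝ → E}
    (hf : Measurable f) (hg : Measurable g) (hA : MeasurableSet A)
    (hF : IntegrableOn F (regionBetween f g A) (μ.prod volume)) :
    ∫ z in regionBetween f g A, F z ∂μ.prod volume
      = ∫ x in A, (∫ y in Ioo (f x) (g x), F (x, y)) ∂μ := by
  have hR := measurableSet_regionBetween hf hg hA
  rw [← integral_indicator hR, integral_prod _ ((integrable_indicator_iff hR).2 hF),
    ← integral_indicator hA]
  congr 1 with x
  by_cases hx : x ∈ A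
  · rw [indicator_of_mem hx, ← integral_indicator measurableSet_Ioo]
    congr 1 with y
    simp only [indicator, regionBetween, mem_ofPred_eq, hx, true_and]
  · simp [indicator, regionBetween, hx]

/-- The simplex `{(s, t) : s > 0, t > 0, s + t < 1}`, over which the hypergeometric function is
integrated, presented as a region between two graphs so that integrals over it can be iterated. -/
def openSimplex : Set (ℝ × ℝ) :=
  regionBetween (fun _ ↦ 0) (fun s ↦ 1 - s) (Ioo 0 1)

lemma measurableSet_openSimplex : MeasurableSet openSimplex :=
  measurableSet_regionBetween (by fun_prop) (by fun_prop) measurableSet_Ioo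

lemma openSimplex_subset_Ioo_prod_Ioo : openSimplex ⊆ Ioo 0 1 ×ˢ Ioo 0 1 := by
  rintro ⟨s, t⟩ ⟨hs, ht₀, ht₁⟩
  exact ⟨hs, ht₀, ht₁.trans (sub_lt_self 1 hs.1)⟩

lemma setIntegral_openSimplex {E : Type*} [NormedAddCommGroup E] [NormedSpace ℝ E]
    {F : ℝ × ℝ → E} (hF : IntegrableOn F openSimplex) :
    ∫ z in openSimplex, F z = ∫ s in Ioo (0 : ℝ) 1, ∫ t in Ioo 0 (1 - s), F (s, t) :=
  setIntegral_regionBetween (by fun_prop) (by fun_prop) measurableSet_Ioo hF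

lemma integral_integral_add_mul_rpow_neg {p u : ℝ} (hp : p < 2) (hp₁ : p ≠ 1) (hu : 0 < u)
    (hu₁ : u ≠ 1) :
    ∫ s in Ioo (0 : ℝ) 1, ∫ t in Ioo 0 (1 - s), (s + u * t) ^ (-p)
      = 1 / ((1 - p) * (2 - p)) * ((1 - u ^ (1 - p)) / (1 - u)) := by
  have inner {s : ℝ} (hs : s ∈ Ioo 0 1) : ∫ t in Ioo 0 (1 - s), (s + u * t) ^ (-p)
      = ((u + (1 - u) * s) ^ (1 - p) - s ^ (1 - p)) / (u * (1 - p)) := by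
    have hus : 0 < u * (1 - s) := mul_pos hu (sub_pos.2 hs.2)
    rw [setIntegral_add_mul_rpow (sub_nonneg.2 hs.2.le) hu.ne'
      (Or.inr ⟨by simpa using hp₁, notMem_uIcc_of_lt hs.1 (add_pos hs.1 hus)⟩)]
    ring_nf
  have hp' : -1 < 1 - p := by linarith
  have integrable_affine : IntegrableOn (fun s ↦ (u + (1 - u) * s) ^ (1 - p)) (Ioo 0 1) := by
    refine (ContinuousOn.integrableOn_Icc ?_).mono_set Ioo_subset_Icc_self
    refine ContinuousOn.rpow_const (by fun_prop) fun s hs ↦ Or.inl (ne_of_gt ?_)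
    nlinarith [hs.1, hs.2, mul_nonneg hu.le (sub_nonneg.2 hs.2)]
  have integrable_pow : IntegrableOn (fun s : ℝ ↦ s ^ (1 - p)) (Ioo 0 1) :=
    (intervalIntegral.integrableOn_Ioo_rpow_iff one_pos).2 hp'
  rw [setIntegral_congr_fun measurableSet_Ioo fun s hs ↦ inner hs, integral_div,
    integral_sub integrable_affine integrable_pow,
    setIntegral_add_mul_rpow zero_le_one (sub_ne_zero.2 hu₁.symm) (Or.inl hp'),
    show 1 - p = 2 - p - 1 by ring, setIntegral_rpow_sub_one (by linarith),
    sub_add_cancel, mul_one, add_sub_cancel, one_rpow, rpow_sub_one hu.ne']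
  have : 1 - u ≠ 0 := sub_ne_zero.2 hu₁.symm
  have : 2 - p - 1 ≠ 0 := by grind
  have : 2 - p ≠ 0 := by linarith
  field_simp
  ring

end Simplex

section Euler

variable {b p s t : ℝ}

lemma hypF_one_add (hb : 0 < b) (p z : ℝ) :
    hypF p b (1 + b) z = b * ∫ u in Ioo (0 : ℝ) 1, u ^ (b - 1) * (1 - z * u) ^ (-p) := by
  simp only [hypF, sub_self, rpow_zero, mul_one, Gamma_one, add_comm 1 b, add_sub_cancel_left,
    Gamma_add_one hb.ne', mul_div_cancel_right₀ _ (Gamma_pos_of_pos hb).ne']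

lemma rpow_neg_mul_hypF_neg_div (hb : 0 < b) (hs : 0 < s) (ht : 0 ≤ t) (p : ℝ) :
    s ^ (-p) * hypF p b (1 + b) (-t / s)
      = b * ∫ u in Ioo (0 : ℝ) 1, u ^ (b - 1) * (s + u * t) ^ (-p) := by
  rw [hypF_one_add hb, mul_left_comm, ← integral_const_mul]
  congr 1
  refine setIntegral_congr_fun measurableSet_Ioo fun u hu ↦ ?_
  have hpos : 0 ≤ 1 - -t / s * u := by
    rw [neg_div, neg_mul, sub_neg_eq_add]
    have := hu.1
    positivity
  have factor : s + u * t = s * (1 - -t / s * u) := by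
    field_simp
    ring
  rw [factor, mul_rpow hs.le hpos, mul_left_comm]

lemma add_rpow_neg_add_le {x y α β : ℝ} (hx : 0 < x) (hy : 0 < y) (hα : 0 ≤ α) (hβ : 0 ≤ β) :
    (x + y) ^ (-(α + β)) ≤ x ^ (-α) * y ^ (-β) := by
  rw [neg_add, rpow_add (add_pos hx hy)]
  gcongr ?_ * ?_
  · exact rpow_le_rpow_of_nonpos hx (by linarith) (by linarith)
  · exact rpow_le_rpow_of_nonpos hy (by linarith) (by linarith)

lemma integrable_rpow_mul_add_mul_rpow_neg (hp₀ : 0 < p) (hp : p < 2) (hb : 0 < b)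
    (hpb : p < 1 + b) :
    Integrable (fun w : (ℝ × ℝ) × ℝ ↦ w.2 ^ (b - 1) * (w.1.1 + w.2 * w.1.2) ^ (-p))
      ((volume.restrict openSimplex).prod (volume.restrict (Ioo 0 1))) := by
  -- Splitting `p = (p - β) + β` bounds the kernel by a product of powers of `s`, `t` and `u`; the
  -- bounds on `β` say that all three powers are integrable on `(0, 1)`.
  obtain ⟨β, hβ, hβ'⟩ : ∃ β, max 0 (p - 1) < β ∧ β < min p (min 1 b) := exists_between (by grind)
  obtain ⟨hβ₀, hβp⟩ := max_lt_iff.1 hβ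
  obtain ⟨hβp', hβ₁, hβb⟩ : β < p ∧ β < 1 ∧ β < b := by simpa only [lt_min_iff] using hβ'
  have integrable_s := integrableOn_rpow_sub_one (show 0 < 1 + β - p by linarith)
  have integrable_t := integrableOn_rpow_sub_one (sub_pos.2 hβ₁)
  have integrable_u := integrableOn_rpow_sub_one (sub_pos.2 hβb)
  have integrable_st : IntegrableOn
      (fun z : ℝ × ℝ ↦ z.1 ^ (1 + β - p - 1) * z.2 ^ (1 - β - 1)) openSimplex := by
    refine IntegrableOn.mono_set ?_ openSimplex_subset_Ioo_prod_Ioo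
    rw [IntegrableOn, Measure.volume_eq_prod, ← Measure.prod_restrict]
    exact integrable_s.mul_prod integrable_t
  refine (integrable_st.mul_prod integrable_u).mono' (by fun_prop) ?_
  rw [Measure.prod_restrict]
  filter_upwards [ae_restrict_mem (measurableSet_openSimplex.prod measurableSet_Ioo)]
    with ⟨⟨s, t⟩, u⟩ ⟨hst, hu⟩
  obtain ⟨⟨hs, -⟩, ht, -⟩ := openSimplex_subset_Ioo_prod_Ioo hst
  have hu₀ := hu.1
  dsimp only at hs ht hu₀ ⊢
  calc
    ‖u ^ (b - 1) * (s + u * t) ^ (-p)‖ = u ^ (b - 1) * (s + u * t) ^ (-(p - β + β)) := by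
      rw [norm_of_nonneg (by positivity), sub_add_cancel]
    _ ≤ u ^ (b - 1) * (s ^ (-(p - β)) * (u * t) ^ (-β)) := by
      gcongr
      exact add_rpow_neg_add_le hs (mul_pos hu₀ ht) (sub_nonneg.2 hβp'.le) hβ₀.le
    _ = s ^ (1 + β - p - 1) * t ^ (1 - β - 1) * u ^ (b - β - 1) := by
      rw [mul_rpow hu₀.le ht.le, show b - β - 1 = b - 1 + -β by ring, rpow_add hu₀]
      ring_nf

theorem integral_rpow_neg_mul_integral_hypF (hp₀ : 0 < p) (hp : p < 2) (hp₁ : p ≠ 1) (hb : 0 < b)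
    (hpb : p < 1 + b) :
    ∫ s in Ioo (0 : ℝ) 1, s ^ (-p) * ∫ t in Ioo 0 (1 - s), hypF p b (1 + b) (-t / s)
      = b / ((1 - p) * (2 - p)) * ∫ u in Ioo (0 : ℝ) 1, (u ^ (b - 1) - u ^ (b - p)) / (1 - u) := by
  let K (z : ℝ × ℝ) (u : ℝ) : ℝ := u ^ (b - 1) * (z.1 + u * z.2) ^ (-p)
  have hK := integrable_rpow_mul_add_mul_rpow_neg hp₀ hp hb hpb
  have euler {s : ℝ} (hs : s ∈ Ioo 0 1) :
      s ^ (-p) * ∫ t in Ioo 0 (1 - s), hypF p b (1 + b) (-t / s)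
        = b * ∫ t in Ioo 0 (1 - s), ∫ u in Ioo (0 : ℝ) 1, K (s, t) u := by
    rw [← integral_const_mul, ← integral_const_mul]
    exact setIntegral_congr_fun measurableSet_Ioo fun t ht ↦
      rpow_neg_mul_hypF_neg_div hb hs.1 ht.1.le p
  have simplex : ∀ᵐ u ∂volume.restrict (Ioo 0 1), ∫ z in openSimplex, K z u
      = 1 / ((1 - p) * (2 - p)) * ((u ^ (b - 1) - u ^ (b - p)) / (1 - u)) := by
    filter_upwards [hK.prod_left_ae, ae_restrict_mem measurableSet_Ioo] with u hKu hu
    rw [setIntegral_openSimplex hKu]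
    simp only [integral_const_mul]
    rw [integral_integral_add_mul_rpow_neg hp hp₁ hu.1 hu.2.ne,
      show b - p = b - 1 + (1 - p) by ring, rpow_add hu.1, mul_left_comm,
      mul_div_assoc', mul_one_sub]
  calc
    _ = b * ∫ s in Ioo (0 : ℝ) 1, ∫ t in Ioo 0 (1 - s), ∫ u in Ioo (0 : ℝ) 1, K (s, t) u := by
      rw [setIntegral_congr_fun measurableSet_Ioo fun s hs ↦ euler hs, integral_const_mul]
    _ = b * ∫ z in openSimplex, ∫ u in Ioo (0 : ℝ) 1, K z u := by
      rw [setIntegral_openSimplex hK.integral_prod_left]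
    _ = b * ∫ u in Ioo (0 : ℝ) 1, ∫ z in openSimplex, K z u := by
      rw [integral_integral_swap hK]
    _ = _ := by
      rw [integral_congr_ae simplex, integral_const_mul]
      ring

end Euler

theorem stmt7_general (κ : ℝ) (hκ : 1 < κ) (hκ₂ : κ ≠ 2) :
    (∫ s in Set.Ioo (0 : ℝ) 1, s ^ (-(2 : ℝ) / κ) *
        ∫ t in Set.Ioo (0 : ℝ) (1 - s), hypF (2 / κ) (1 / κ) (1 + 1 / κ) (-t / s))
      = κ * π * Real.cot (π / κ) / (2 * (κ - 2) * (κ - 1)) := by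
  have hκ₀ : 0 < κ := one_pos.trans hκ
  have h2κ : 2 / κ < 2 := div_lt_self two_pos hκ
  have h2κ₁ : 2 / κ ≠ 1 := by rwa [Ne, div_eq_one_iff_eq hκ₀.ne', eq_comm]
  have hκ' : 2 / κ < 1 + 1 / κ := by
    field_simp
    linarith
  rw [neg_div, integral_rpow_neg_mul_integral_hypF (by positivity) h2κ h2κ₁ (by positivity) hκ',
    show 1 / κ - 2 / κ = -(1 / κ) by ring, setIntegral_rpow_sub_rpow_div_eq_pi_mul_cot
      (by positivity) (by rwa [div_lt_one hκ₀]), mul_one_div]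
  have : κ - 2 ≠ 0 := sub_ne_zero.2 hκ₂
  have : κ - 1 ≠ 0 := by linarith
  rw [show 1 - 2 / κ = (κ - 2) / κ by field_simp, show 2 - 2 / κ = 2 * (κ - 1) / κ by field_simp]
  field_simp

theorem stmt7 (k : ℕ) (hk : 3 ≤ k) :
    (∫ s in Set.Ioo (0 : ℝ) 1, s ^ (-(2 : ℝ) / k) *
        ∫ t in Set.Ioo (0 : ℝ) (1 - s), hypF (2 / k) (1 / k) (1 + 1 / k) (-t / s))
      = (k : ℝ) * π * Real.cot (π / k) / (2 * ((k : ℝ) - 2) * ((k : ℝ) - 1)) :=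
  stmt7_general k (by exact_mod_cast (by lia : 1 < k)) (by exact_mod_cast (by lia : k ≠ 2))
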